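/- Let A, B be nonzero real numbers and α, β ∈ ℝ, and let p, q be coprime integers with A·q = B·p (i.e., A/B = p/q). If p is even or q is even, then (1/T)·∫₀ᵀ Φ(A·t − α, B·t − β) dt → 0 as T → ∞, where Φ(u,v) = sgn(cos(2πu)·cos(2πv)). -/

import Mathlib

open Filter Real MeasureTheory

noncomputable def sgn (t : ℝ) : ℝ := if 0 < t then 1 else if t < 0 then -1 else 0

noncomputable def Φ (u v : ℝ) : ℝ := sgn (Real.cos (2 * π * u) * Real.cos (2 * π * v))

theorem sgn_neg (t : ℝ) : sgn (-t) = -sgn t := by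
  unfold sgn
  split_ifs <;> linarith

theorem abs_sgn_le_one (t : ℝ) : |sgn t| ≤ 1 := by
  unfold sgn
  split_ifs <;> simp

theorem measurable_sgn : Measurable sgn :=
  Measurable.ite measurableSet_Ioi measurable_const
    (Measurable.ite measurableSet_Iio measurable_const measurable_const)

/-- The primitive of an antiperiodic function has twice its antiperiod as a period. -/
theorem Function.Antiperiodic.periodic_intervalIntegral {f : ℝ → ℝ} {S : ℝ}
    (hf : Function.Antiperiodic f S) (hint : ∀ a b, IntervalIntegrable f volume a b) :
    Function.Periodic (fun T => ∫ t in (0 : ℝ)..T, f t) (2 * S) := by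
  have key : ∀ T, ∫ t in (0 : ℝ)..(T + S), f t
      = (∫ t in (0 : ℝ)..S, f t) - ∫ t in (0 : ℝ)..T, f t := by
    intro T
    have h : ∫ t in (0 : ℝ)..T, f (t + S) = ∫ t in (0 + S)..(T + S), f t :=
      intervalIntegral.integral_comp_add_right f S
    rw [intervalIntegral.integral_congr (fun t _ => hf t), intervalIntegral.integral_neg,
      zero_add] at h
    rw [← intervalIntegral.integral_add_adjacent_intervals (hint 0 S) (hint S (T + S)), ← h]
    ring
  intro T
  change ∫ t in (0 : ℝ)..(T + 2 * S), f t = ∫ t in (0 : ℝ)..T, f t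
  rw [two_mul, ← add_assoc, key, key]
  ring

/-- A bounded antiperiodic function has zero mean. -/
theorem Function.Antiperiodic.tendsto_average_zero {f : ℝ → ℝ} {S C : ℝ}
    (hf : Function.Antiperiodic f S) (hS : 0 < S)
    (hint : ∀ a b, IntervalIntegrable f volume a b) (hC : ∀ t, |f t| ≤ C) :
    Tendsto (fun T : ℝ => (1 / T) * ∫ t in (0 : ℝ)..T, f t) atTop (nhds 0) := by
  have hC₀ : 0 ≤ C := (abs_nonneg _).trans (hC 0)
  have hbdd : ∀ T, |∫ t in (0 : ℝ)..T, f t| ≤ C * (2 * S) := by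
    intro T
    obtain ⟨y, hy, hTy⟩ :=
      (hf.periodic_intervalIntegral hint).exists_mem_Ico₀ (by positivity) T
    have hle : |∫ t in (0 : ℝ)..y, f t| ≤ C * |y - 0| := by
      rw [← Real.norm_eq_abs]
      exact intervalIntegral.norm_integral_le_of_norm_le_const fun t _ => hC t
    rw [sub_zero, abs_of_nonneg hy.1] at hle
    rw [hTy]
    exact hle.trans (mul_le_mul_of_nonneg_left hy.2.le hC₀)
  simp only [one_div]
  exact tendsto_inv_atTop_zero.zero_mul_isBoundedUnder_le
    (isBoundedUnder_of ⟨C * (2 * S), hbdd⟩)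

theorem Φ_add_half_int (u v : ℝ) (p q : ℤ) (hpq : Odd (p + q)) :
    Φ (u + p / 2) (v + q / 2) = -Φ u v := by
  have hu : 2 * π * (u + p / 2) = 2 * π * u + p * π := by ring
  have hv : 2 * π * (v + q / 2) = 2 * π * v + q * π := by ring
  have hsign : (-1 : ℝ) ^ p * (-1) ^ q = -1 := by
    rw [← zpow_add₀ (by norm_num), hpq.neg_one_zpow]
  unfold Φ
  rw [hu, hv, Real.cos_add_int_mul_pi, Real.cos_add_int_mul_pi, mul_mul_mul_comm, hsign,
    neg_one_mul, sgn_neg]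

theorem IsCoprime.odd_add_of_even_or_even {p q : ℤ} (hcop : IsCoprime p q)
    (heven : Even p ∨ Even q) : Odd (p + q) := by
  obtain ⟨a, b, hab⟩ := hcop
  by_contra hodd
  rw [Int.not_odd_iff_even] at hodd
  have hp : Even p := by grind
  have hq : Even q := by grind
  have hone : Even (1 : ℤ) := hab ▸ (hp.mul_left a).add (hq.mul_left b)
  exact absurd hone (by decide)

theorem time_average_even_case
    (A B : ℝ) (hA : A ≠ 0) (hB : B ≠ 0) (α β : ℝ)
    (p q : ℤ) (hcop : IsCoprime p q) (hpq : A * (q : ℝ) = B * (p : ℝ))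
    (heven : Even p ∨ Even q) :
    Tendsto (fun T : ℝ => (1 / T) * ∫ t in (0:ℝ)..T, Φ (A * t - α) (B * t - β))
      atTop (nhds 0) := by
  have hp : p ≠ 0 := by
    rintro rfl
    have hq : q = 0 := by simpa [hA] using hpq
    subst hq
    exact not_isCoprime_zero_zero hcop
  set f : ℝ → ℝ := fun t => Φ (A * t - α) (B * t - β) with hf
  have hanti : Function.Antiperiodic f (p / (2 * A)) := by
    intro t
    have hu : A * (t + p / (2 * A)) - α = (A * t - α) + p / 2 := by field_simp; ring
    have hv : B * (t + p / (2 * A)) - β = (B * t - β) + q / 2 := by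
      field_simp
      linear_combination -hpq
    simp only [hf]
    rw [hu, hv, Φ_add_half_int _ _ _ _ (hcop.odd_add_of_even_or_even heven)]
  have hτ : (p : ℝ) / (2 * A) ≠ 0 := by positivity
  have hanti_abs : Function.Antiperiodic f |(p : ℝ) / (2 * A)| := by
    rcases abs_choice ((p : ℝ) / (2 * A)) with h | h <;> rw [h]
    · exact hanti
    · exact hanti.neg
  have hmeas : Measurable f := measurable_sgn.comp (by fun_prop)
  have hbdd : ∀ t, |f t| ≤ 1 := fun t => abs_sgn_le_one _
  refine hanti_abs.tendsto_average_zero (abs_pos.mpr hτ) (fun a b => ?_) hbdd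
  exact (intervalIntegrable_const (c := (1 : ℝ))).mono_fun hmeas.aestronglyMeasurable
    (Eventually.of_forall fun t => by simpa using hbdd t)
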